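/- arXiv:1210.0659 — 4 statements merged into one kernel-verified Lean document; each statement's English description precedes it below -/
import Mathlib

section
/- Let H := [[1, 0], [−cγλ, 1]] (a 2×2 complex matrix). Then for all z ∈ ℝ, F_q(z)·H = e^{−cγλz}·H·F_p(z); equivalently, F_q(z) = e^{−cγλz}·H·F_p(z)·H⁻¹ since det H = 1. In particular, the monodromy matrices satisfy M_q = e^{−cγλT}·H·M_p·H⁻¹. -/
noncomputable section

/-- The coefficient matrix of the first-order system equivalent to problem (P). -/
def Amatₚ (c γ : ℝ) (f : ℝ → ℝ) (lam : ℂ) (z : ℝ) : Matrix (Fin 2) (Fin 2) ℂ :=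
  !![0, 1; -(γ : ℂ) * (lam ^ 2 + (Real.cos (f z) : ℂ)), 2 * (c : ℂ) * (γ : ℂ) * lam]

/-- The coefficient matrix of the first-order system equivalent to Hill's equation (Q). -/
def Amat_q (γ : ℝ) (f : ℝ → ℝ) (μ : ℂ) (z : ℝ) : Matrix (Fin 2) (Fin 2) ℂ :=
  !![0, 1; μ - (γ : ℂ) * (Real.cos (f z) : ℂ), 0]

/-- `F` is the fundamental solution matrix of `Y' = A(z)Y`: `F' = A·F` (entrywise)
and `F(0) = I`. -/
def IsFundamental (A F : ℝ → Matrix (Fin 2) (Fin 2) ℂ) : Prop :=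
  (∀ (i j : Fin 2) (z : ℝ), HasDerivAt (fun t : ℝ => F t i j) ((A z * F z) i j) z) ∧
    F 0 = 1

/-- The matrix `H = [[1,0],[-cγλ,1]]` conjugating the two systems. -/
def Hmat (c γ : ℝ) (lam : ℂ) : Matrix (Fin 2) (Fin 2) ℂ :=
  !![1, 0; -(c : ℂ) * (γ : ℂ) * lam, 1]

/-- The Wronskian of two solutions of the scalar second-order equation is constant. -/
lemma wronskian_const (k u v x y : ℝ → ℂ)
    (hu : ∀ z, HasDerivAt u (v z) z) (hv : ∀ z, HasDerivAt v (k z * u z) z)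
    (hx : ∀ z, HasDerivAt x (y z) z) (hy : ∀ z, HasDerivAt y (k z * x z) z) (z : ℝ) :
    u z * y z - v z * x z = u 0 * y 0 - v 0 * x 0 := by
  have h : ∀ z, HasDerivAt (fun z => u z * y z - v z * x z) 0 z := by
    intro z
    refine (((hu z).mul (hy z)).sub ((hv z).mul (hx z))).congr_deriv ?_
    ring
  exact is_const_of_deriv_eq_zero (fun z => (h z).differentiableAt) (fun z => (h z).deriv) z 0

/-- Uniqueness for the scalar second-order equation, given a fundamental system `(x₁, x₂)`. -/
lemma sol_zero (k u v x₁ y₁ x₂ y₂ : ℝ → ℂ)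
    (hu : ∀ z, HasDerivAt u (v z) z) (hv : ∀ z, HasDerivAt v (k z * u z) z)
    (hx₁ : ∀ z, HasDerivAt x₁ (y₁ z) z) (hy₁ : ∀ z, HasDerivAt y₁ (k z * x₁ z) z)
    (hx₂ : ∀ z, HasDerivAt x₂ (y₂ z) z) (hy₂ : ∀ z, HasDerivAt y₂ (k z * x₂ z) z)
    (a : x₁ 0 = 1) (b : y₁ 0 = 0) (c : x₂ 0 = 0) (d : y₂ 0 = 1)
    (hu0 : u 0 = 0) (hv0 : v 0 = 0) (z : ℝ) : u z = 0 ∧ v z = 0 := by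
  have h1 := wronskian_const k u v x₁ y₁ hu hv hx₁ hy₁ z
  have h2 := wronskian_const k u v x₂ y₂ hu hv hx₂ hy₂ z
  have h3 := wronskian_const k x₁ y₁ x₂ y₂ hx₁ hy₁ hx₂ hy₂ z
  simp only [a, b, c, d, hu0, hv0] at h1 h2 h3
  constructor
  · linear_combination x₁ z * h2 - x₂ z * h1 - u z * h3
  · linear_combination y₁ z * h2 - y₂ z * h1 - v z * h3

/-- The fundamental solutions of (P) and (Q) are exponentially conjugate, and hence
so are the monodromy matrices: `M_q = e^{-cγλT}·H·M_p·H⁻¹`. -/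
theorem stmt5 (c γ T : ℝ) (hc : c ^ 2 ≠ 1) (hγ : γ = 1 / (c ^ 2 - 1))
    (f : ℝ → ℝ) (hf : ContDiff ℝ 2 f)
    (hpend : ∀ z : ℝ, (c ^ 2 - 1) * deriv (deriv f) z + Real.sin (f z) = 0)
    (hT : 0 < T) (hper : ∀ z : ℝ, ∃ k : ℤ, f (z + T) = f z + 2 * Real.pi * k)
    (hmin : ∀ S : ℝ, 0 < S → (∀ z : ℝ, ∃ k : ℤ, f (z + S) = f z + 2 * Real.pi * k) → T ≤ S)
    (lam : ℂ) (Fp Fq : ℝ → Matrix (Fin 2) (Fin 2) ℂ)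
    (hFp : IsFundamental (Amatₚ c γ f lam) Fp)
    (hFq : IsFundamental (Amat_q γ f ((γ : ℂ) ^ 2 * lam ^ 2)) Fq) :
    (∀ z : ℝ, Fq z * Hmat c γ lam =
      Complex.exp (-(c : ℂ) * (γ : ℂ) * lam * (z : ℂ)) • (Hmat c γ lam * Fp z)) ∧
    (∀ z : ℝ, Fq z =
      Complex.exp (-(c : ℂ) * (γ : ℂ) * lam * (z : ℂ)) •
        (Hmat c γ lam * Fp z * (Hmat c γ lam)⁻¹)) ∧
    Fq T = Complex.exp (-(c : ℂ) * (γ : ℂ) * lam * (T : ℂ)) •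
        (Hmat c γ lam * Fp T * (Hmat c γ lam)⁻¹) := by
  have hγ' : (γ : ℂ) * ((c : ℂ) ^ 2 - 1) = 1 := by
    have : γ * (c ^ 2 - 1) = 1 := by
      rw [hγ]; exact one_div_mul_cancel (sub_ne_zero.mpr hc)
    exact_mod_cast this
  obtain ⟨hp, hp0⟩ := hFp
  obtain ⟨hq, hq0⟩ := hFq
  have hE : ∀ z : ℝ, HasDerivAt (fun z : ℝ => Complex.exp (-(c : ℂ) * (γ : ℂ) * lam * (z : ℂ)))
      (Complex.exp (-(c : ℂ) * (γ : ℂ) * lam * (z : ℂ)) * (-(c : ℂ) * (γ : ℂ) * lam)) z := by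
    intro z
    have h := ((Complex.ofRealCLM.hasDerivAt (x := z)).const_mul (-(c : ℂ) * (γ : ℂ) * lam)).cexp
    simpa using h
  have p0 : ∀ j z, HasDerivAt (fun t => Fp t 0 j) (Fp z 1 j) z := by
    intro j z
    simpa [Amatₚ, Matrix.mul_apply, Fin.sum_univ_two] using hp 0 j z
  have p1 : ∀ j z, HasDerivAt (fun t => Fp t 1 j)
      (-(γ : ℂ) * (lam ^ 2 + (Real.cos (f z) : ℂ)) * Fp z 0 j
        + 2 * (c : ℂ) * (γ : ℂ) * lam * Fp z 1 j) z := by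
    intro j z
    simpa [Amatₚ, Matrix.mul_apply, Fin.sum_univ_two] using hp 1 j z
  have q0 : ∀ j z, HasDerivAt (fun t => Fq t 0 j) (Fq z 1 j) z := by
    intro j z
    simpa [Amat_q, Matrix.mul_apply, Fin.sum_univ_two] using hq 0 j z
  have q1 : ∀ j z, HasDerivAt (fun t => Fq t 1 j)
      (((γ : ℂ) ^ 2 * lam ^ 2 - (γ : ℂ) * (Real.cos (f z) : ℂ)) * Fq z 0 j) z := by
    intro j z
    simpa [Amat_q, Matrix.mul_apply, Fin.sum_univ_two] using hq 1 j z
  have main : ∀ z : ℝ, Fq z * Hmat c γ lam =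
      Complex.exp (-(c : ℂ) * (γ : ℂ) * lam * (z : ℂ)) • (Hmat c γ lam * Fp z) := by
    intro z
    have key : ∀ j, _ ∧ _ := fun j => sol_zero
      (fun z => (γ : ℂ) ^ 2 * lam ^ 2 - (γ : ℂ) * (Real.cos (f z) : ℂ))
      (fun z => (Fq z 0 0 * Hmat c γ lam 0 j + Fq z 0 1 * Hmat c γ lam 1 j)
        - Complex.exp (-(c : ℂ) * (γ : ℂ) * lam * (z : ℂ)) * Fp z 0 j)
      (fun z => (Fq z 1 0 * Hmat c γ lam 0 j + Fq z 1 1 * Hmat c γ lam 1 j)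
        - Complex.exp (-(c : ℂ) * (γ : ℂ) * lam * (z : ℂ)) *
          (-(c : ℂ) * (γ : ℂ) * lam * Fp z 0 j + Fp z 1 j))
      (fun z => Fq z 0 0) (fun z => Fq z 1 0) (fun z => Fq z 0 1) (fun z => Fq z 1 1)
      (by
        intro z
        refine ((((q0 0 z).mul_const _).add ((q0 1 z).mul_const _)).sub
          ((hE z).mul (p0 j z))).congr_deriv ?_
        ring)
      (by
        intro z
        refine ((((q1 0 z).mul_const _).add ((q1 1 z).mul_const _)).sub
          ((hE z).mul (((p0 j z).const_mul _).add (p1 j z)))).congr_deriv ?_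
        simp only [Pi.add_apply]
        linear_combination (-Complex.exp (-(c : ℂ) * (γ : ℂ) * lam * (z : ℂ)) *
          Fp z 0 j * γ * lam ^ 2) * hγ')
      (q0 0) (q1 0) (q0 1) (q1 1)
      (by simp [hq0]) (by simp [hq0]) (by simp [hq0]) (by simp [hq0])
      (by fin_cases j <;> simp [hq0, hp0, Hmat])
      (by fin_cases j <;> simp [hq0, hp0, Hmat]) z
    have h00 : Hmat c γ lam 0 0 = 1 := by simp [Hmat]
    have h01 : Hmat c γ lam 0 1 = 0 := by simp [Hmat]
    have h10 : Hmat c γ lam 1 0 = -(c : ℂ) * (γ : ℂ) * lam := by simp [Hmat]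
    have h11 : Hmat c γ lam 1 1 = 1 := by simp [Hmat]
    ext i j
    obtain ⟨k0, k1⟩ := key j
    fin_cases i
    · change (Fq z * Hmat c γ lam) 0 j = (_ • (Hmat c γ lam * Fp z)) 0 j
      rw [Matrix.smul_apply, Matrix.mul_apply, Matrix.mul_apply, Fin.sum_univ_two,
        Fin.sum_univ_two, h00, h01, smul_eq_mul]
      linear_combination k0
    · change (Fq z * Hmat c γ lam) 1 j = (_ • (Hmat c γ lam * Fp z)) 1 j
      rw [Matrix.smul_apply, Matrix.mul_apply, Matrix.mul_apply, Fin.sum_univ_two,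
        Fin.sum_univ_two, h10, h11, smul_eq_mul]
      linear_combination k1
  have hdet : IsUnit (Hmat c γ lam).det := by simp [Hmat, Matrix.det_fin_two]
  have second : ∀ z : ℝ, Fq z =
      Complex.exp (-(c : ℂ) * (γ : ℂ) * lam * (z : ℂ)) •
        (Hmat c γ lam * Fp z * (Hmat c γ lam)⁻¹) := by
    intro z
    rw [← Matrix.smul_mul, ← main z, Matrix.mul_nonsing_inv_cancel_right _ _ hdet]
  exact ⟨main, second, second T⟩
end
end

section
/- A complex number ρ is an eigenvalue of the monodromy matrix M_p (a Floquet multiplier of problem (P)) if and only if e^{−cγλT}·ρ is an eigenvalue of the monodromy matrix M_q (a Floquet multiplier of problem (Q)). -/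
noncomputable section

/-- `ρ` is an eigenvalue of the 2×2 complex matrix `M`. -/
def IsEigenvalueOf (M : Matrix (Fin 2) (Fin 2) ℂ) (ρ : ℂ) : Prop :=
  ∃ v : Fin 2 → ℂ, v ≠ 0 ∧ M.mulVec v = ρ • v

theorem const_aux (h h' : ℝ → ℂ) (hh : ∀ z, HasDerivAt h (h' z) z) (h0 : ∀ z, h' z = 0) (z : ℝ) :
    h z = h 0 :=
  is_const_of_deriv_eq_zero (fun x => (hh x).differentiableAt)
    (fun x => by rw [(hh x).deriv, h0]) z 0

/-- `ρ` is a Floquet multiplier of (P) iff `e^{-cγλT}ρ` is a Floquet multiplier of (Q). -/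
theorem stmt6 (c γ T : ℝ) (hc : c ^ 2 ≠ 1) (hγ : γ = 1 / (c ^ 2 - 1))
    (f : ℝ → ℝ) (hf : ContDiff ℝ 2 f)
    (hpend : ∀ z : ℝ, (c ^ 2 - 1) * deriv (deriv f) z + Real.sin (f z) = 0)
    (hT : 0 < T) (hper : ∀ z : ℝ, ∃ k : ℤ, f (z + T) = f z + 2 * Real.pi * k)
    (hmin : ∀ S : ℝ, 0 < S → (∀ z : ℝ, ∃ k : ℤ, f (z + S) = f z + 2 * Real.pi * k) → T ≤ S)
    (lam : ℂ) (Fp Fq : ℝ → Matrix (Fin 2) (Fin 2) ℂ)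
    (hFp : IsFundamental (Amatₚ c γ f lam) Fp)
    (hFq : IsFundamental (Amat_q γ f ((γ : ℂ) ^ 2 * lam ^ 2)) Fq) :
    ∀ ρ : ℂ, IsEigenvalueOf (Fp T) ρ ↔
      IsEigenvalueOf (Fq T) (Complex.exp (-(c : ℂ) * (γ : ℂ) * lam * (T : ℂ)) * ρ) := by
  set a : ℂ := (c : ℂ) * (γ : ℂ) * lam with ha
  have hg : (c : ℂ) ^ 2 * γ - 1 = γ := by
    have : c ^ 2 - 1 ≠ 0 := sub_ne_zero.mpr hc
    have h : c ^ 2 * γ - 1 = γ := by rw [hγ]; field_simp; ring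
    exact_mod_cast h
  have hμ : a ^ 2 - γ * lam ^ 2 = (γ : ℂ) ^ 2 * lam ^ 2 := by
    rw [ha]; linear_combination (γ : ℂ) * lam ^ 2 * hg
  obtain ⟨hp, hp0⟩ := hFp
  obtain ⟨hq, hq0⟩ := hFq
  have hE : ∀ z : ℝ, HasDerivAt (fun t : ℝ => Complex.exp (-a * (t : ℂ)))
      (Complex.exp (-a * (z : ℂ)) * -a) z := by
    intro z
    have h1 : HasDerivAt (fun t : ℝ => -a * (t : ℂ)) (-a) z := by
      simpa using (Complex.ofRealCLM.hasDerivAt (x := z)).const_mul (-a)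
    exact h1.cexp
  have p1 : ∀ j z, HasDerivAt (fun t : ℝ => Fp t 0 j) (Fp z 1 j) z := by
    intro j z
    simpa [Amatₚ, Matrix.mul_apply, Fin.sum_univ_two] using hp 0 j z
  have p2 : ∀ j z, HasDerivAt (fun t : ℝ => Fp t 1 j)
      (-(γ : ℂ) * (lam ^ 2 + (Real.cos (f z) : ℂ)) * Fp z 0 j + 2 * a * Fp z 1 j) z := by
    intro j z
    refine (hp 1 j z).congr_deriv ?_
    simp only [Amatₚ, Matrix.mul_apply, Fin.sum_univ_two, ha]
    simp
    left; ring
  have q1 : ∀ j z, HasDerivAt (fun t : ℝ => Fq t 0 j) (Fq z 1 j) z := by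
    intro j z
    simpa [Amat_q, Matrix.mul_apply, Fin.sum_univ_two] using hq 0 j z
  have q2 : ∀ j z, HasDerivAt (fun t : ℝ => Fq t 1 j)
      ((a ^ 2 - γ * lam ^ 2 - (γ : ℂ) * (Real.cos (f z) : ℂ)) * Fq z 0 j) z := by
    intro j z
    refine (hq 1 j z).congr_deriv ?_
    simp [Amat_q, Matrix.mul_apply, Fin.sum_univ_two, hμ]
  -- Wronskian of (Q)
  have hdet : Fq T 0 0 * Fq T 1 1 - Fq T 0 1 * Fq T 1 0 = 1 := by
    have := const_aux (fun t => Fq t 0 0 * Fq t 1 1 - Fq t 0 1 * Fq t 1 0) _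
      (fun z => ((q1 0 z).mul (q2 1 z)).sub ((q1 1 z).mul (q2 0 z))) (fun z => by ring) T
    simpa [hq0] using this
  -- mixed Wronskians
  have hW : ∀ i j, Complex.exp (-a * (T : ℂ)) *
      (Fq T 0 i * (Fp T 1 j - a * Fp T 0 j) - Fq T 1 i * Fp T 0 j) =
      Fq 0 0 i * (Fp 0 1 j - a * Fp 0 0 j) - Fq 0 1 i * Fp 0 0 j := by
    intro i j
    have := const_aux (fun t => Complex.exp (-a * (t : ℂ)) *
      (Fq t 0 i * (Fp t 1 j - a * Fp t 0 j) - Fq t 1 i * Fp t 0 j)) _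
      (fun z => (hE z).mul (((q1 i z).mul ((p2 j z).sub ((p1 j z).const_mul a))).sub
        ((q2 i z).mul (p1 j z)))) (fun z => by simp only [Pi.mul_apply, Pi.sub_apply]; ring) T
    simpa using this
  have w00 := hW 0 0
  have w01 := hW 0 1
  have w10 := hW 1 0
  have w11 := hW 1 1
  simp [hp0, hq0] at w00 w01 w10 w11
  have hexp : Complex.exp (-(c : ℂ) * (γ : ℂ) * lam * (T : ℂ)) = Complex.exp (-a * (T : ℂ)) := by
    rw [ha]; congr 1; ring
  have hne := Complex.exp_ne_zero (-a * (T : ℂ))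
  rw [hexp]
  have w00' : Complex.exp (-a * (T : ℂ)) *
      (Fq T 0 0 * (Fp T 1 0 - a * Fp T 0 0) - Fq T 1 0 * Fp T 0 0) = -a := by
    have := hW 0 0; simpa [hp0, hq0] using this
  have w01' : Complex.exp (-a * (T : ℂ)) *
      (Fq T 0 0 * (Fp T 1 1 - a * Fp T 0 1) - Fq T 1 0 * Fp T 0 1) = 1 := by
    have := hW 0 1; simpa [hp0, hq0] using this
  have w10' : Complex.exp (-a * (T : ℂ)) *
      (Fq T 0 1 * (Fp T 1 0 - a * Fp T 0 0) - Fq T 1 1 * Fp T 0 0) = -1 := by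
    have := hW 1 0; simpa [hp0, hq0] using this
  have w11' : Complex.exp (-a * (T : ℂ)) *
      (Fq T 0 1 * (Fp T 1 1 - a * Fp T 0 1) - Fq T 1 1 * Fp T 0 1) = 0 := by
    have := hW 1 1; simpa [hp0, hq0] using this
  clear w00 w01 w10 w11
  generalize Complex.exp (-a * (T : ℂ)) = e at *
  -- e S⁻¹ Fp = Fq S⁻¹
  have k00 : e * Fp T 0 0 = Fq T 0 0 - a * Fq T 0 1 := by
    linear_combination (-e * Fp T 0 0) * hdet + Fq T 0 1 * w00' - Fq T 0 0 * w10'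
  have k01 : e * Fp T 0 1 = Fq T 0 1 := by
    linear_combination (-e * Fp T 0 1) * hdet + Fq T 0 1 * w01' - Fq T 0 0 * w11'
  have k10 : e * (Fp T 1 0 - a * Fp T 0 0) = Fq T 1 0 - a * Fq T 1 1 := by
    linear_combination (-e * (Fp T 1 0 - a * Fp T 0 0)) * hdet + Fq T 1 1 * w00' - Fq T 1 0 * w10'
  have k11 : e * (Fp T 1 1 - a * Fp T 0 1) = Fq T 1 1 := by
    linear_combination (-e * (Fp T 1 1 - a * Fp T 0 1)) * hdet + Fq T 1 1 * w01' - Fq T 1 0 * w11'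
  intro ρ
  constructor
  · rintro ⟨v, hv, h⟩
    have h0 := congrFun h 0
    have h1 := congrFun h 1
    simp only [Matrix.mulVec, dotProduct, Fin.sum_univ_two, Pi.smul_apply, smul_eq_mul] at h0 h1
    refine ⟨![v 0, v 1 - a * v 0], ?_, ?_⟩
    · intro hz
      have z0 : v 0 = 0 := by simpa using congrFun hz 0
      have z1 : v 1 = 0 := by simpa [z0] using congrFun hz 1
      exact hv (by ext i; fin_cases i <;> simp [z0, z1])
    · ext i
      fin_cases i
      · simp [Matrix.mulVec, dotProduct, Fin.sum_univ_two]
        linear_combination e * h0 - v 0 * k00 - v 1 * k01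
      · simp [Matrix.mulVec, dotProduct, Fin.sum_univ_two]
        linear_combination e * (h1 - a * h0) - v 0 * k10 - v 1 * k11
  · rintro ⟨v, hv, h⟩
    have h0 := congrFun h 0
    have h1 := congrFun h 1
    simp only [Matrix.mulVec, dotProduct, Fin.sum_univ_two, Pi.smul_apply, smul_eq_mul] at h0 h1
    refine ⟨![v 0, v 1 + a * v 0], ?_, ?_⟩
    · intro hz
      have z0 : v 0 = 0 := by simpa using congrFun hz 0
      have z1 : v 1 = 0 := by simpa [z0] using congrFun hz 1
      exact hv (by ext i; fin_cases i <;> simp [z0, z1])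
    · ext i
      apply mul_left_cancel₀ hne
      fin_cases i
      · simp [-mul_eq_mul_left_iff, Matrix.mulVec, dotProduct, Fin.sum_univ_two]
        linear_combination h0 + v 0 * k00 + (v 1 + a * v 0) * k01
      · simp [-mul_eq_mul_left_iff, Matrix.mulVec, dotProduct, Fin.sum_univ_two]
        linear_combination h1 + a * h0 + v 0 * (k10 + a * k00) + (v 1 + a * v 0) * (k11 + a * k01)
end
end

section
/- Let f be a librational wave (0 < E < 2, c² ≠ 1) with fundamental period T > 0, normalized so that sin(f(0)) = 0 and f'(0) > 0. For each μ ∈ ℝ let F_μ : ℝ → Matrix (Fin 2) (Fin 2) ℝ be the fundamental solution of the system Y'(z) = [[0, 1], [μ − γ cos(f(z)), 0]]·Y(z) with F_μ(0) = I, and define the Hill discriminant Δ_q(μ) := tr F_μ(T). If the function μ ↦ Δ_q(μ) has derivative d at μ = 0, then d < 0. (Equivalently: 0 = μ₁⁽⁰⁾ > μ₂⁽⁰⁾, i.e. μ = 0 is the second largest periodic eigenvalue of Hill's equation and is simple as a periodic eigenvalue.) -/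
noncomputable section

/-- `F` is the fundamental solution matrix of the real system `Y' = A(z)Y`. -/
def IsFundamentalR (A F : ℝ → Matrix (Fin 2) (Fin 2) ℝ) : Prop :=
  (∀ (i j : Fin 2) (z : ℝ), HasDerivAt (fun t : ℝ => F t i j) ((A z * F z) i j) z) ∧
    F 0 = 1

open Set Filter Topology

lemma pend_right_pos (g : ℝ → ℝ) (v a : ℝ) (hg : HasDerivAt g v a) (hv : 0 < v) :
    ∃ ε > 0, ∀ z, a < z → z < a + ε → g a < g z := by
  have h1 := (hasDerivAt_iff_tendsto_slope.1 hg).eventually (lt_mem_nhds hv)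
  rw [eventually_nhdsWithin_iff, Metric.eventually_nhds_iff] at h1
  obtain ⟨ε, hε, h⟩ := h1
  refine ⟨ε, hε, fun z hz hz' => ?_⟩
  have := h (y := z) (by rw [Real.dist_eq, abs_lt]; constructor <;> linarith) (by simp; exact hz.ne')
  rw [slope_def_field] at this
  have h2 : 0 < z - a := by linarith
  have := (div_pos_iff_of_pos_right h2).1 this
  linarith

lemma pend_left_nonpos (g : ℝ → ℝ) (v s : ℝ) (hg : HasDerivAt g v s) (hs : 0 < s)
    (h0 : g s = 0) (hpos : ∀ z, 0 < z → z < s → 0 < g z) : v ≤ 0 := by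
  by_contra hv
  push Not at hv
  have h1 := (hasDerivAt_iff_tendsto_slope.1 hg).eventually (lt_mem_nhds hv)
  rw [eventually_nhdsWithin_iff, Metric.eventually_nhds_iff] at h1
  obtain ⟨ε, hε, h⟩ := h1
  set z := max (s - ε / 2) (s / 2) with hz
  have hz1 : s - ε/2 ≤ z := le_max_left _ _
  have hz2 : s / 2 ≤ z := le_max_right _ _
  have hz3 : z < s := max_lt (by linarith) (by linarith)
  have := h (y := z) (by rw [Real.dist_eq, abs_lt]; constructor <;> linarith) (by simp; exact hz3.ne)
  rw [slope_def_field, h0] at this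
  have h2 := hpos z (by linarith) hz3
  have : (g z - 0) / (z - s) < 0 := div_neg_of_pos_of_neg (by linarith) (by linarith)
  linarith

lemma pend_first_zero (g : ℝ → ℝ) (v T : ℝ) (hc : Continuous g) (hg : HasDerivAt g v 0)
    (hv : 0 < v) (h0 : g 0 = 0) (hT : 0 < T) (hgT : g T ≤ 0) :
    ∃ s, 0 < s ∧ s ≤ T ∧ g s = 0 ∧ ∀ z, 0 < z → z < s → 0 < g z := by
  obtain ⟨ε, hε, h⟩ := pend_right_pos g v 0 hg hv
  rw [h0, zero_add] at h
  have hTε : ε ≤ T := by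
    by_contra hh
    have := h T hT (by linarith)
    linarith
  have hcomp : IsCompact (Icc (ε/2) T ∩ {z | g z ≤ 0}) :=
    isCompact_Icc.inter_right (isClosed_le hc continuous_const)
  obtain ⟨s, ⟨⟨hs1, hs2⟩, hs3⟩, hs4⟩ := hcomp.exists_isLeast ⟨T, ⟨by linarith, le_rfl⟩, hgT⟩
  have hs0 : 0 < s := by linarith
  have hpos : ∀ z, 0 < z → z < s → 0 < g z := by
    intro z hz hzs
    by_contra hh
    by_cases hze : z < ε
    · exact hh (h z hz hze)
    · have := hs4 (a := z) ⟨⟨by linarith, by linarith⟩, by simpa using hh⟩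
      linarith
  refine ⟨s, hs0, hs2, le_antisymm hs3 ?_, hpos⟩
  have hcl : IsClosed {z | 0 ≤ g z} := isClosed_le continuous_const hc
  have : closure (Ioo 0 s) ⊆ {z | 0 ≤ g z} :=
    closure_minimal (fun z hz => (hpos z hz.1 hz.2).le) hcl
  rw [closure_Ioo hs0.ne] at this
  exact this ⟨hs0.le, le_rfl⟩

lemma pend_trig (x : ℝ) (h0 : 0 < x) (hpi : x < Real.pi) : x * Real.cos x - Real.sin x < 0 := by
  have hder : ∀ z : ℝ, HasDerivAt (fun z => z * Real.cos z - Real.sin z) (- (z * Real.sin z)) z := by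
    intro z
    have := ((hasDerivAt_id z).mul (Real.hasDerivAt_cos z)).sub (Real.hasDerivAt_sin z)
    refine this.congr_deriv ?_
    simp
  have h : StrictAntiOn (fun z => z * Real.cos z - Real.sin z) (Icc 0 Real.pi) := by
    apply strictAntiOn_of_deriv_neg (convex_Icc _ _)
    · exact fun z _ => (hder z).continuousAt.continuousWithinAt
    · intro z hz
      rw [interior_Icc] at hz
      rw [(hder z).deriv]
      have := mul_pos hz.1 (Real.sin_pos_of_pos_of_lt_pi hz.1 hz.2)
      linarith
  have := h ⟨le_rfl, Real.pi_pos.le⟩ ⟨h0.le, hpi.le⟩ h0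
  simpa using this

lemma pend_const (h : ℝ → ℝ) (hh : ∀ z, HasDerivAt h 0 z) (z : ℝ) : h z = h 0 :=
  is_const_of_deriv_eq_zero (fun z => (hh z).differentiableAt) (fun z => (hh z).deriv) z 0

/-- Solutions of Hill's equation are combinations of the fundamental ones. -/
lemma pend_lin (Q u up w wp y yp : ℝ → ℝ)
    (hu : ∀ z, HasDerivAt u (up z) z) (hup : ∀ z, HasDerivAt up (-Q z * u z) z)
    (hw : ∀ z, HasDerivAt w (wp z) z) (hwp : ∀ z, HasDerivAt wp (-Q z * w z) z)
    (hy : ∀ z, HasDerivAt y (yp z) z) (hyp : ∀ z, HasDerivAt yp (-Q z * y z) z)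
    (hu0 : u 0 = 1) (hup0 : up 0 = 0) (hw0 : w 0 = 0) (hwp0 : wp 0 = 1) (z : ℝ) :
    u z * wp z - up z * w z = 1 ∧ y z = y 0 * u z + yp 0 * w z := by
  have h1 := pend_const (fun z => u z * wp z - up z * w z) (fun z =>
    (((hu z).mul (hwp z)).sub ((hup z).mul (hw z))).congr_deriv (by ring)) z
  have h2 := pend_const (fun z => u z * yp z - up z * y z) (fun z =>
    (((hu z).mul (hyp z)).sub ((hup z).mul (hy z))).congr_deriv (by ring)) z
  have h3 := pend_const (fun z => y z * wp z - yp z * w z) (fun z =>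
    (((hy z).mul (hwp z)).sub ((hyp z).mul (hw z))).congr_deriv (by ring)) z
  simp only [hu0, hup0, hw0, hwp0] at h1 h2 h3
  refine ⟨by linarith, ?_⟩
  linear_combination -y z * h1 + w z * h2 + u z * h3

lemma pend_unique (ω : ℝ) (g p g2 p2 : ℝ → ℝ)
    (hg : ∀ z, HasDerivAt g (p z) z) (hp : ∀ z, HasDerivAt p (-ω * Real.sin (g z)) z)
    (hg2 : ∀ z, HasDerivAt g2 (p2 z) z) (hp2 : ∀ z, HasDerivAt p2 (-ω * Real.sin (g2 z)) z)
    (h0 : g 0 = g2 0) (h1 : p 0 = p2 0) (z : ℝ) : g z = g2 z := by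
  have hlip : LipschitzWith (max 1 (‖ω‖₊)) (fun x : ℝ × ℝ => (x.2, -ω * Real.sin x.1)) := by
    have hs : LipschitzWith (‖ω‖₊) (fun x : ℝ × ℝ => -ω * Real.sin x.1) := by
      have := ((LipschitzWith.of_dist_le_mul (f := Real.sin) (K := 1) (fun x y => by
        simpa [Real.dist_eq] using Real.abs_sin_sub_sin_le x y)).comp
          (LipschitzWith.prod_fst (α := ℝ) (β := ℝ)))
      refine LipschitzWith.of_dist_le_mul (fun x y => ?_)
      have h := this.dist_le_mul x y
      simp only [Function.comp, Real.dist_eq] at h ⊢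
      rw [← mul_sub, abs_mul, abs_neg]
      simpa using mul_le_mul_of_nonneg_left h (abs_nonneg ω)
    exact LipschitzWith.prodMk LipschitzWith.prod_snd hs
  have := ODE_solution_unique_univ (v := fun _ (x : ℝ × ℝ) => (x.2, -ω * Real.sin x.1))
    (s := fun _ => univ) (K := max 1 ‖ω‖₊) (f := fun z => (g z, p z)) (g := fun z => (g2 z, p2 z))
    (t₀ := 0) (fun _ => hlip.lipschitzOnWith) (fun t => ⟨(hg t).prodMk (hp t), mem_univ _⟩)
    (fun t => ⟨(hg2 t).prodMk (hp2 t), mem_univ _⟩) (by simp [h0, h1])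
  exact congrArg Prod.fst (congrFun this z)

/-- Sturm-type comparison on a half period. -/
lemma pend_sturm (ω v s : ℝ) (hω : 0 < ω) (hv : 0 < v) (g p W Wp : ℝ → ℝ)
    (hg : ∀ z, HasDerivAt g (p z) z) (hp : ∀ z, HasDerivAt p (-ω * Real.sin (g z)) z)
    (hW : ∀ z, HasDerivAt W (Wp z) z)
    (hWp : ∀ z, HasDerivAt Wp (-(ω * Real.cos (g z)) * W z) z)
    (hg0 : g 0 = 0) (hW0 : W 0 = 0) (hWp0 : Wp 0 = 1)
    (hcos : ∀ z, -1 < Real.cos (g z)) (hs : 0 < s) (hgs : g s = 0)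
    (hpos : ∀ z, 0 < z → z < s → 0 < g z) : 0 < W s := by
  have hcg : Continuous g := continuous_iff_continuousAt.2 fun z => (hg z).continuousAt
  have hcW : Continuous W := continuous_iff_continuousAt.2 fun z => (hW z).continuousAt
  have hpi : ∀ z, 0 ≤ z → g z < Real.pi := by
    intro z hz
    by_contra hh
    push Not at hh
    have := intermediate_value_Icc hz hcg.continuousOn
    obtain ⟨y, _, hy⟩ := this (show Real.pi ∈ Icc (g 0) (g z) from ⟨by rw [hg0]; exact Real.pi_pos.le, hh⟩)
    have := hcos y
    rw [hy, Real.cos_pi] at this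
    linarith
  by_contra hh
  push Not at hh
  obtain ⟨t, ht0, hts, hWt, hWpos⟩ := pend_first_zero W 1 s hcW (hWp0 ▸ hW 0) one_pos hW0 hs hh
  have hWpt := pend_left_nonpos W (Wp t) t (hW t) ht0 hWt hWpos
  have hgt : 0 ≤ g t := by
    rcases hts.lt_or_eq with h | h
    · exact (hpos t ht0 h).le
    · rw [h, hgs]
  have hder : ∀ z, HasDerivAt (fun z => W z * p z - Wp z * g z)
      (ω * W z * (g z * Real.cos (g z) - Real.sin (g z))) z := fun z =>
    (((hW z).mul (hp z)).sub ((hWp z).mul (hg z))).congr_deriv (by ring)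
  have hanti : StrictAntiOn (fun z => W z * p z - Wp z * g z) (Icc 0 t) := by
    apply strictAntiOn_of_deriv_neg (convex_Icc _ _)
    · exact fun z _ => (hder z).continuousAt.continuousWithinAt
    · intro z hz
      rw [interior_Icc] at hz
      rw [(hder z).deriv]
      exact mul_neg_of_pos_of_neg (mul_pos hω (hWpos z hz.1 hz.2))
        (pend_trig _ (hpos z hz.1 (by linarith [hz.2])) (hpi z hz.1.le))
  have := hanti ⟨le_rfl, ht0.le⟩ ⟨ht0.le, le_rfl⟩ ht0
  simp only [hW0, hg0, hWt] at this
  nlinarith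

lemma pend_beta (ω v T : ℝ) (hω : 0 < ω) (hv : 0 < v) (g p W Wp : ℝ → ℝ)
    (hg : ∀ z, HasDerivAt g (p z) z) (hp : ∀ z, HasDerivAt p (-ω * Real.sin (g z)) z)
    (hW : ∀ z, HasDerivAt W (Wp z) z)
    (hWp : ∀ z, HasDerivAt Wp (-(ω * Real.cos (g z)) * W z) z)
    (hg0 : g 0 = 0) (hp0 : p 0 = v) (hW0 : W 0 = 0) (hWp0 : Wp 0 = 1)
    (hcos : ∀ z, -1 < Real.cos (g z))
    (hT : IsLeast {S : ℝ | 0 < S ∧ ∀ z : ℝ, g (z + S) = g z} T) :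
    W T < 0 := by
  have hcg : Continuous g := continuous_iff_continuousAt.2 fun z => (hg z).continuousAt
  obtain ⟨⟨hT0, hTper⟩, hTmin⟩ := hT
  have hgT : g T = 0 := by have := hTper 0; rw [zero_add] at this; rw [this, hg0]
  have hpT : p T = v := by
    have h1 : HasDerivAt (fun z => g (z + T)) (p (0 + T)) 0 := (hg (0 + T)).comp_add_const 0 T
    have h2 : (fun z => g (z + T)) = g := funext hTper
    rw [h2] at h1
    have := h1.unique (hg 0)
    rw [zero_add] at this
    rw [this, hp0]
  obtain ⟨s, hs0, hsT, hgs, hpos⟩ := pend_first_zero g v T hcg (hp0 ▸ hg 0) hv hg0 hT0 hgT.le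
  have hWs := pend_sturm ω v s hω hv g p W Wp hg hp hW hWp hg0 hW0 hWp0 hcos hs0 hgs hpos
  have hps : p s = -v := by
    have h1 := pend_left_nonpos g (p s) s (hg s) hs0 hgs hpos
    have h2 := pend_const (fun z => p z * p z - 2 * ω * Real.cos (g z)) (fun z =>
      (((hp z).mul (hp z)).sub (((hg z).cos).const_mul (2 * ω))).congr_deriv (by ring)) s
    simp only [hgs, hg0, hp0] at h2
    have h3 : (p s - v) * (p s + v) = 0 := by linarith
    rcases mul_eq_zero.1 h3 with h | h <;> linarith
  -- antiperiodicity
  have hanti : ∀ z, g (z + s) = - g z := by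
    intro z
    have := pend_unique ω g p (fun z => - g (z + s)) (fun z => - p (z + s)) hg hp
      (fun z => ((hg (z + s)).comp_add_const z s).neg)
      (fun z => (((hp (z + s)).comp_add_const z s).neg).congr_deriv (by rw [Real.sin_neg]; ring))
      (by simp [hg0, hgs]) (by simp [hp0, hps]) z
    linarith
  have hT2 : T = 2 * s := by
    apply le_antisymm
    · refine hTmin ⟨by linarith, fun z => ?_⟩
      rw [show z + 2 * s = (z + s) + s by ring, hanti, hanti, neg_neg]
    · by_contra hlt
      push Not at hlt
      rcases hsT.lt_or_eq with h | h
      · have h1 := hanti (T - s)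
        rw [sub_add_cancel, hgT] at h1
        have := hpos (T - s) (by linarith) (by linarith)
        linarith
      · rw [← h, hps] at hpT; linarith
  have hlin := pend_lin (fun z => ω * Real.cos (g z)) (fun z => p z / v)
    (fun z => -ω * Real.sin (g z) / v) W Wp
    (fun z => W (z + s)) (fun z => Wp (z + s))
    (fun z => (hp z).div_const v)
    (fun z => ((((hg z).sin).const_mul (-ω)).div_const v).congr_deriv (by ring))
    hW hWp
    (fun z => (hW (z + s)).comp_add_const z s)
    (fun z => ((hWp (z + s)).comp_add_const z s).congr_deriv (by
      rw [hanti, Real.cos_neg]))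
    (by simp [hp0, hv.ne']) (by simp [hg0]) hW0 hWp0 s
  simp only [hps, hgs, Real.sin_zero, zero_add] at hlin
  have hv1 : -v / v = -1 := by field_simp
  rw [hv1] at hlin
  obtain ⟨h1, h2⟩ := hlin
  rw [hT2, two_mul, h2]
  have : Wp s = -1 := by simp at h1; linarith
  rw [this]; linarith

lemma pend_close (Q : ℝ → ℝ) (B T : ℝ) (hQ : ∀ z, |Q z| ≤ B) (hT : 0 < T) (y yp : ℝ → ℝ)
    (hy : ∀ z, HasDerivAt y (yp z) z) :
    (∀ z, HasDerivAt yp ((0 - Q z) * y z) z) →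
    ∃ C, 0 ≤ C ∧ ∀ μ, 0 < μ → μ ≤ 1 → ∀ x xp : ℝ → ℝ, (∀ z, HasDerivAt x (xp z) z) →
      (∀ z, HasDerivAt xp ((μ - Q z) * x z) z) → x 0 = y 0 → xp 0 = yp 0 →
      ∀ z ∈ Icc 0 T, |x z - y z| ≤ C * μ := by
  intro hyp
  have hcy : Continuous y := continuous_iff_continuousAt.2 fun z => (hy z).continuousAt
  obtain ⟨M, hM⟩ := isCompact_Icc.bddAbove_image (K := Icc 0 T) ((hcy.pow 2).continuousOn)
  have hM' : ∀ z ∈ Icc 0 T, y z ^ 2 ≤ M := fun z hz => hM ⟨z, hz, rfl⟩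
  have hM0 : 0 ≤ M := (sq_nonneg _).trans (hM' 0 ⟨le_rfl, hT.le⟩)
  have hB0 : 0 ≤ B := (abs_nonneg _).trans (hQ 0)
  set K : ℝ := 3 + B with hK
  have hK0 : 0 ≤ K := by positivity
  refine ⟨Real.sqrt (M * T * Real.exp (K * T)), Real.sqrt_nonneg _, ?_⟩
  intro μ hμ hμ1 x xp hx hxp h0 h1 z hz
  set N : ℝ → ℝ := fun z => (x z - y z) ^ 2 + (xp z - yp z) ^ 2 with hN
  have hNd : ∀ z, HasDerivAt N (2 * (x z - y z) * (xp z - yp z) * (1 + μ - Q z)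
      + 2 * μ * y z * (xp z - yp z)) z := fun z =>
    ((((hx z).sub (hy z)).pow 2).add (((hxp z).sub (hyp z)).pow 2)).congr_deriv (by
      simp; ring)
  have hE : ∀ z, HasDerivAt (fun z => Real.exp (-K * z)) (Real.exp (-K * z) * (-K)) z := fun z => by
    simpa using ((hasDerivAt_id z).const_mul (-K)).exp
  have hG : ∀ z, HasDerivAt (fun z => N z * Real.exp (-K * z) - μ ^ 2 * M * z) _ z := fun z =>
    ((hNd z).mul (hE z)).sub ((hasDerivAt_id z).const_mul (μ ^ 2 * M))
  have hanti : AntitoneOn (fun z => N z * Real.exp (-K * z) - μ ^ 2 * M * z) (Icc 0 T) := by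
    apply antitoneOn_of_deriv_nonpos (convex_Icc _ _)
    · exact fun z _ => (hG z).continuousAt.continuousWithinAt
    · exact fun z _ => (hG z).differentiableAt.differentiableWithinAt
    · intro z hz
      rw [interior_Icc] at hz
      rw [(hG z).deriv]
      have hy2 := hM' z ⟨hz.1.le, hz.2.le⟩
      have he1 : Real.exp (-K * z) ≤ 1 := by
        rw [Real.exp_le_one_iff]; nlinarith [hz.1]
      have he0 := Real.exp_pos (-K * z)
      have hq := abs_le.1 (hQ z)
      set a := x z - y z
      set b := xp z - yp z
      have hb1 : 2 * a * b * (1 + μ - Q z) ≤ (2 + B) * (a ^ 2 + b ^ 2) := by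
        have k1 : |2 * a * b| ≤ a ^ 2 + b ^ 2 := by
          rw [abs_le]; constructor <;> nlinarith [sq_nonneg (a - b), sq_nonneg (a + b)]
        have k2 : |1 + μ - Q z| ≤ 2 + B := by rw [abs_le]; constructor <;> linarith
        calc _ ≤ |2 * a * b * (1 + μ - Q z)| := le_abs_self _
          _ = |2 * a * b| * |1 + μ - Q z| := abs_mul _ _
          _ ≤ (a ^ 2 + b ^ 2) * (2 + B) := mul_le_mul k1 k2 (abs_nonneg _) (by positivity)
          _ = _ := by ring
      have hb2 : 2 * μ * y z * b ≤ μ ^ 2 * M + b ^ 2 := by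
        nlinarith [sq_nonneg (μ * y z - b), mul_le_mul_of_nonneg_left hy2 (sq_nonneg μ)]
      have hb3 : 2 * a * b * (1 + μ - Q z) + 2 * μ * y z * b - K * N z ≤ μ ^ 2 * M := by
        have : N z = a ^ 2 + b ^ 2 := rfl
        rw [this, hK]; nlinarith [sq_nonneg a]
      have hb4 : (2 * a * b * (1 + μ - Q z) + 2 * μ * y z * b - K * N z) * Real.exp (-K * z)
          ≤ μ ^ 2 * M := by
        calc _ ≤ μ ^ 2 * M * Real.exp (-K * z) := mul_le_mul_of_nonneg_right hb3 he0.le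
          _ ≤ μ ^ 2 * M * 1 := mul_le_mul_of_nonneg_left he1 (by positivity)
          _ = _ := mul_one _
      linarith
  have hz0 := hanti ⟨le_rfl, hT.le⟩ hz hz.1
  have hN0 : N 0 = 0 := by simp [hN, h0, h1]
  simp only [hN0] at hz0
  have hNz : N z * Real.exp (-K * z) ≤ μ ^ 2 * M * T := by
    have : μ ^ 2 * M * z ≤ μ ^ 2 * M * T := mul_le_mul_of_nonneg_left hz.2 (by positivity)
    linarith
  have hNz2 : N z ≤ μ ^ 2 * M * T * Real.exp (K * T) := by
    have e1 : N z = N z * Real.exp (-K * z) * Real.exp (K * z) := by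
      rw [mul_assoc, ← Real.exp_add]; simp
    rw [e1]
    have : Real.exp (K * z) ≤ Real.exp (K * T) :=
      Real.exp_le_exp.2 (mul_le_mul_of_nonneg_left hz.2 hK0)
    exact mul_le_mul hNz this (Real.exp_pos _).le (by positivity)
  apply abs_le_of_sq_le_sq _ (by positivity)
  rw [mul_pow, Real.sq_sqrt (by positivity)]
  have : (x z - y z) ^ 2 ≤ N z := by simp only [hN]; nlinarith [sq_nonneg (xp z - yp z)]
  linarith

lemma pend_deriv (Q : ℝ → ℝ) (B T β d : ℝ) (hQ : ∀ z, |Q z| ≤ B) (hT : 0 < T) (hβ : β < 0)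
    (U Up W Wp : ℝ → ℝ → ℝ)
    (hU : ∀ μ z, HasDerivAt (U μ) (Up μ z) z) (hUp : ∀ μ z, HasDerivAt (Up μ) ((μ - Q z) * U μ z) z)
    (hW : ∀ μ z, HasDerivAt (W μ) (Wp μ z) z) (hWp : ∀ μ z, HasDerivAt (Wp μ) ((μ - Q z) * W μ z) z)
    (hU0 : ∀ μ, U μ 0 = 1) (hUp0 : ∀ μ, Up μ 0 = 0) (hW0 : ∀ μ, W μ 0 = 0)
    (hWp0 : ∀ μ, Wp μ 0 = 1)
    (hUT : U 0 T = 1) (hUpT : Up 0 T = 0) (hWT : W 0 T = β) (hWpT : Wp 0 T = 1)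
    (hd : HasDerivAt (fun μ => U μ T + Wp μ T) d 0) : d < 0 := by
  have hcU : Continuous (U 0) := continuous_iff_continuousAt.2 fun z => (hU 0 z).continuousAt
  have hcW : Continuous (W 0) := continuous_iff_continuousAt.2 fun z => (hW 0 z).continuousAt
  obtain ⟨C1, hC10, hC1⟩ := pend_close Q B T hQ hT (U 0) (Up 0) (hU 0) (hUp 0)
  obtain ⟨C2, hC20, hC2⟩ := pend_close Q B T hQ hT (W 0) (Wp 0) (hW 0) (hWp 0)
  obtain ⟨M1, hM1⟩ := isCompact_Icc.bddAbove_image (K := Icc 0 T) (hcU.abs.continuousOn)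
  have hM1' : ∀ z ∈ Icc 0 T, |U 0 z| ≤ M1 := fun z hz => hM1 ⟨z, hz, rfl⟩
  obtain ⟨M2, hM2⟩ := isCompact_Icc.bddAbove_image (K := Icc 0 T) (hcW.abs.continuousOn)
  have hM2' : ∀ z ∈ Icc 0 T, |W 0 z| ≤ M2 := fun z hz => hM2 ⟨z, hz, rfl⟩
  set J : ℝ → ℝ := fun z => ∫ t in (0:ℝ)..z, (U 0 t) ^ 2 with hJ
  have hJd : ∀ z, HasDerivAt J (U 0 z ^ 2) z := fun z =>
    (hcU.pow 2).integral_hasStrictDerivAt 0 z |>.hasDerivAt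
  have hJ0 : J 0 = 0 := by simp [hJ]
  have hJT : 0 < J T := by
    apply intervalIntegral.integral_pos hT (hcU.pow 2).continuousOn (fun z _ => sq_nonneg _)
    exact ⟨0, ⟨le_rfl, hT.le⟩, by simp [hU0]⟩
  set C := M1 * C2 + M2 * C1 + |β| * M1 * C1 with hC
  have key : ∀ μ, 0 < μ → μ ≤ 1 →
      U μ T + Wp μ T - (U 0 T + Wp 0 T) ≤ μ * (β * J T) + C * μ ^ 2 * T := by
    intro μ hμ hμ1
    set Φ : ℝ → ℝ := fun z => (U 0 z * Wp μ z - Up 0 z * W μ z)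
      - (W 0 z * Up μ z - Wp 0 z * U μ z) + β * (U 0 z * Up μ z - Up 0 z * U μ z)
      - μ * β * J z - C * μ ^ 2 * z with hΦ
    have hΦd : ∀ z, HasDerivAt Φ (μ * (U 0 z * W μ z - W 0 z * U μ z + β * (U 0 z * U μ z))
        - μ * β * U 0 z ^ 2 - C * μ ^ 2) z := fun z => by
      have e1 := ((hU 0 z).mul (hWp μ z)).sub ((hUp 0 z).mul (hW μ z))
      have e2 := ((hW 0 z).mul (hUp μ z)).sub ((hWp 0 z).mul (hU μ z))
      have e3 := (((hU 0 z).mul (hUp μ z)).sub ((hUp 0 z).mul (hU μ z))).const_mul β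
      have e4 := (hJd z).const_mul (μ * β)
      have e5 := (hasDerivAt_id z).const_mul (C * μ ^ 2)
      exact ((((e1.sub e2).add e3).sub e4).sub e5).congr_deriv (by ring)
    have hanti : AntitoneOn Φ (Icc 0 T) := by
      apply antitoneOn_of_deriv_nonpos (convex_Icc _ _)
      · exact fun z _ => (hΦd z).continuousAt.continuousWithinAt
      · exact fun z _ => (hΦd z).differentiableAt.differentiableWithinAt
      · intro z hz
        have hz' := interior_subset hz
        rw [(hΦd z).deriv]
        have a1 := hC1 μ hμ hμ1 (U μ) (Up μ) (hU μ) (hUp μ) (by simp [hU0]) (by simp [hUp0]) z hz'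
        have a2 := hC2 μ hμ hμ1 (W μ) (Wp μ) (hW μ) (hWp μ) (by simp [hW0]) (by simp [hWp0]) z hz'
        have b1 := hM1' z hz'
        have b2 := hM2' z hz'
        have hM10 : 0 ≤ M1 := (abs_nonneg _).trans b1
        have hM20 : 0 ≤ M2 := (abs_nonneg _).trans b2
        have c1 : U 0 z * (W μ z - W 0 z) ≤ M1 * (C2 * μ) := by
          refine (le_abs_self _).trans ?_
          rw [abs_mul]; exact mul_le_mul b1 a2 (abs_nonneg _) hM10
        have c2 : -(W 0 z * (U μ z - U 0 z)) ≤ M2 * (C1 * μ) := by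
          refine (neg_le_abs _).trans ?_
          rw [abs_mul]; exact mul_le_mul b2 a1 (abs_nonneg _) hM20
        have c3 : β * (U 0 z * (U μ z - U 0 z)) ≤ |β| * (M1 * (C1 * μ)) := by
          refine (le_abs_self _).trans ?_
          rw [abs_mul, abs_mul]
          exact mul_le_mul_of_nonneg_left (mul_le_mul b1 a1 (abs_nonneg _) hM10) (abs_nonneg _)
        have := mul_le_mul_of_nonneg_left (add_le_add (add_le_add c1 c2) c3) hμ.le
        rw [hC]
        linarith
    have := hanti ⟨le_rfl, hT.le⟩ ⟨hT.le, le_rfl⟩ hT.le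
    simp only [hΦ, hU0, hUp0, hW0, hWp0, hUT, hUpT, hWT, hWpT, hJ0] at this
    rw [hUT, hWpT]
    linarith
  have hle : d ≤ β * J T := by
    have h1 := hd.tendsto_slope_zero_right
    have h2 : Tendsto (fun μ : ℝ => β * J T + C * μ * T) (𝓝[>] 0) (𝓝 (β * J T)) := by
      have : Continuous (fun μ : ℝ => β * J T + C * μ * T) := by fun_prop
      have h := this.tendsto 0
      simp only [mul_zero, zero_mul, add_zero] at h
      exact h.mono_left nhdsWithin_le_nhds
    refine le_of_tendsto_of_tendsto h1 h2 ?_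
    filter_upwards [Ioc_mem_nhdsGT (zero_lt_one (α := ℝ))] with μ hμ
    have := key μ hμ.1 hμ.2
    simp only [zero_add, smul_eq_mul]
    rw [inv_mul_le_iff₀ hμ.1]
    linarith
  have := mul_neg_of_neg_of_pos hβ hJT
  linarith

/-- For a librational wave, the Hill discriminant `Δ_q(μ) = tr F_μ(T)` has strictly
negative derivative at `μ = 0`: i.e. `μ = 0` is the periodic eigenvalue `μ₁⁽⁰⁾`. -/
theorem stmt15 (c E γ T : ℝ) (hc : c ^ 2 ≠ 1) (hγ : γ = 1 / (c ^ 2 - 1))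
    (hE0 : 0 < E) (hE2 : E < 2)
    (f : ℝ → ℝ) (hf : ContDiff ℝ 2 f)
    (hpend : ∀ z : ℝ, (c ^ 2 - 1) * deriv (deriv f) z + Real.sin (f z) = 0)
    (henergy : ∀ z : ℝ, (1 / 2) * (c ^ 2 - 1) * (deriv f z) ^ 2 + 1 - Real.cos (f z) = E)
    (hT : IsLeast {S : ℝ | 0 < S ∧ ∀ z : ℝ, f (z + S) = f z} T)
    (hsin0 : Real.sin (f 0) = 0) (hf'0 : 0 < deriv f 0)
    (F : ℝ → ℝ → Matrix (Fin 2) (Fin 2) ℝ)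
    (hF : ∀ μ : ℝ, IsFundamentalR
      (fun z : ℝ => !![0, 1; μ - γ * Real.cos (f z), 0]) (F μ))
    (d : ℝ) (hd : HasDerivAt (fun μ : ℝ => Matrix.trace (F μ T)) d 0) :
    d < 0 := by
  set m : ℝ := c ^ 2 - 1 with hm
  have hm0 : m ≠ 0 := sub_ne_zero.2 hc
  have hγm : γ * m = 1 := by rw [hγ]; field_simp
  set v := deriv f 0 with hv
  set κ := Real.cos (f 0) with hκ
  have hκ2 : κ ^ 2 = 1 := by have := Real.sin_sq_add_cos_sq (f 0); rw [hsin0] at this; linarith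
  have hf1 : ∀ z, HasDerivAt f (deriv f z) z := fun z =>
    ((hf.differentiable (by norm_num)) z).hasDerivAt
  have hf2 : ∀ z, HasDerivAt (deriv f) (deriv (deriv f) z) z := fun z => by
    have h : ContDiff ℝ 1 (deriv f) := by
      have := (contDiff_succ_iff_deriv (𝕜 := ℝ) (n := 1) (f := f)).1 (by simpa [one_add_one_eq_two] using hf)
      exact this.2.2
    exact ((h.differentiable (by norm_num)) z).hasDerivAt
  set g : ℝ → ℝ := fun z => f z - f 0 with hg
  have hsing : ∀ z, Real.sin (f z) = κ * Real.sin (g z) := fun z => by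
    rw [hg]; simp only [Real.sin_sub, hsin0, ← hκ]; linear_combination -Real.sin (f z) * hκ2
  have hcosg : ∀ z, Real.cos (f z) = κ * Real.cos (g z) := fun z => by
    rw [hg]; simp only [Real.cos_sub, hsin0, ← hκ]; linear_combination -Real.cos (f z) * hκ2
  have he0 := henergy 0
  rw [← hv, ← hκ] at he0
  have hv2 : 0 < v ^ 2 := by positivity
  have hcases : (κ = 1 ∧ 0 < m) ∨ (κ = -1 ∧ m < 0) := by
    rcases (by simpa using hκ2 : κ = 1 ∨ κ = -1) with h | h
    · left; refine ⟨h, ?_⟩; rw [h] at he0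
      by_contra hh; push Not at hh; nlinarith
    · right; refine ⟨h, ?_⟩; rw [h] at he0
      by_contra hh; push Not at hh; nlinarith
  have hω : 0 < γ * κ := by
    rcases hcases with ⟨h, h'⟩ | ⟨h, h'⟩
    · rw [h, hγ, mul_one]; positivity
    · rw [h, hγ]; have : 1 / m < 0 := div_neg_of_pos_of_neg one_pos h'
      linarith
  have hcos : ∀ z, -1 < Real.cos (g z) := by
    intro z
    have h1 := henergy z
    rw [hcosg] at h1
    have h2 := sq_nonneg (deriv f z)
    rcases hcases with ⟨h, h'⟩ | ⟨h, h'⟩ <;> rw [h] at h1 <;> nlinarith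
  have hp : ∀ z, HasDerivAt (deriv f) (-(γ * κ) * Real.sin (g z)) z := fun z =>
    (hf2 z).congr_deriv (by
      have := hpend z
      rw [hsing] at this
      linear_combination γ * this - deriv (deriv f) z * hγm)
  have hgd : ∀ z, HasDerivAt g (deriv f z) z := fun z => (hf1 z).sub_const _
  have hU : ∀ μ z, HasDerivAt (fun t => F μ t 0 0) (F μ z 1 0) z := fun μ z =>
    ((hF μ).1 0 0 z).congr_deriv (by simp [Matrix.mul_apply, Fin.sum_univ_two])
  have hUp : ∀ μ z, HasDerivAt (fun t => F μ t 1 0) ((μ - γ * Real.cos (f z)) * F μ z 0 0) z :=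
    fun μ z => ((hF μ).1 1 0 z).congr_deriv (by simp [Matrix.mul_apply, Fin.sum_univ_two])
  have hW : ∀ μ z, HasDerivAt (fun t => F μ t 0 1) (F μ z 1 1) z := fun μ z =>
    ((hF μ).1 0 1 z).congr_deriv (by simp [Matrix.mul_apply, Fin.sum_univ_two])
  have hWp : ∀ μ z, HasDerivAt (fun t => F μ t 1 1) ((μ - γ * Real.cos (f z)) * F μ z 0 1) z :=
    fun μ z => ((hF μ).1 1 1 z).congr_deriv (by simp [Matrix.mul_apply, Fin.sum_univ_two])
  have hU0 : ∀ μ, F μ 0 0 0 = 1 := fun μ => by rw [(hF μ).2]; simp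
  have hUp0 : ∀ μ, F μ 0 1 0 = 0 := fun μ => by rw [(hF μ).2]; simp
  have hW0 : ∀ μ, F μ 0 0 1 = 0 := fun μ => by rw [(hF μ).2]; simp
  have hWp0 : ∀ μ, F μ 0 1 1 = 1 := fun μ => by rw [(hF μ).2]; simp
  have hTg : IsLeast {S : ℝ | 0 < S ∧ ∀ z : ℝ, g (z + S) = g z} T := by
    simpa [hg, sub_left_inj] using hT
  have hT0 : 0 < T := hT.1.1
  have hper : ∀ z, f (z + T) = f z := hT.1.2
  have hβ := pend_beta (γ * κ) v T hω hf'0 g (deriv f) (fun t => F 0 t 0 1) (fun t => F 0 t 1 1)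
    hgd hp (hW 0) (fun z => (hWp 0 z).congr_deriv (by rw [hcosg]; ring)) (by simp [hg]) rfl
    (hW0 0) (hWp0 0) hcos hTg
  have hfT : f T = f 0 := by have := hper 0; rwa [zero_add] at this
  have hpT : deriv f T = v := by
    have h1 : HasDerivAt (fun z => f (z + T)) (deriv f (0 + T)) 0 :=
      (hf1 (0 + T)).comp_add_const 0 T
    rw [show (fun z => f (z + T)) = f from funext hper] at h1
    have := h1.unique (hf1 0)
    rwa [zero_add] at this
  have hlin : ∀ z, _ := fun z => pend_lin (fun z => γ * Real.cos (f z)) (fun t => F 0 t 0 0)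
    (fun t => F 0 t 1 0)
    (fun t => F 0 t 0 1) (fun t => F 0 t 1 1) (deriv f) (fun z => -(γ * κ) * Real.sin (g z))
    (hU 0) (fun z => (hUp 0 z).congr_deriv (by ring)) (hW 0)
    (fun z => (hWp 0 z).congr_deriv (by ring)) hp
    (fun z => (((hgd z).sin).const_mul (-(γ * κ))).congr_deriv (by rw [hcosg]; ring))
    (hU0 0) (hUp0 0) (hW0 0) (hWp0 0) z
  have hUeq : ∀ z, deriv f z = v * F 0 z 0 0 := fun z => by
    have := (hlin z).2
    simpa [hg] using this
  have hUT : F 0 T 0 0 = 1 := by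
    have := hUeq T
    rw [hpT] at this
    exact mul_left_cancel₀ hf'0.ne' (by linarith)
  have hUpT : F 0 T 1 0 = 0 := by
    have h1 := (hU 0 T).const_mul v
    rw [show (fun t => v * F 0 t 0 0) = deriv f from (funext hUeq).symm] at h1
    have h2 := h1.unique (hp T)
    have hgT : g T = 0 := by simp [hg, hfT]
    rw [hgT, Real.sin_zero, mul_zero] at h2
    exact (mul_eq_zero.1 h2).resolve_left hf'0.ne'
  have hWpT : F 0 T 1 1 = 1 := by
    have := (hlin T).1
    simp only [hUT, hUpT] at this
    linarith
  refine pend_deriv (fun z => γ * Real.cos (f z)) |γ| T (F 0 T 0 1) d (fun z => ?_) hT0 hβ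
    (fun μ t => F μ t 0 0) (fun μ t => F μ t 1 0) (fun μ t => F μ t 0 1) (fun μ t => F μ t 1 1)
    hU hUp hW hWp hU0 hUp0 hW0 hWp0 hUT hUpT rfl hWpT ?_
  · rw [abs_mul]
    exact mul_le_of_le_one_right (abs_nonneg _) (Real.abs_cos_le_one _)
  · simpa [Matrix.trace_fin_two] using hd
end
end

section
/- Define P : (0, 2) → ℝ by P(E) := 2·∫₀¹ du / (√u · √(−E(u − 1)² − 2(u − 1))) (the integrand is positive on (0,1) since −E(u−1)² − 2(u−1) = (1 − u)(2 − E(1 − u)) > 0 for 0 < u < 1 and 0 < E < 2, and the improper integral converges). Then P is strictly increasing on (0, 2): for all E₁, E₂ with 0 < E₁ < E₂ < 2 one has P(E₁) < P(E₂). -/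
noncomputable section

/-- The normalized period function of librational traveling waves:
`P(E) = 2∫₀¹ du / (√u · √(−E(u−1)² − 2(u−1)))`. -/
def periodP (E : ℝ) : ℝ :=
  2 * ∫ u in (0:ℝ)..1,
    1 / (Real.sqrt u * Real.sqrt (-E * (u - 1) ^ 2 - 2 * (u - 1)))

lemma integrable_aux (E : ℝ) (h0 : 0 < E) (h2 : E < 2) :
    IntervalIntegrable (fun u : ℝ =>
      1 / (Real.sqrt u * Real.sqrt (-E * (u - 1) ^ 2 - 2 * (u - 1))))
      MeasureTheory.volume 0 1 := by
  have hA : IntervalIntegrable (fun u : ℝ => u ^ (-(1/2) : ℝ)) MeasureTheory.volume 0 1 :=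
    intervalIntegral.intervalIntegrable_rpow' (by norm_num)
  have hB : IntervalIntegrable (fun u : ℝ => (1 - u) ^ (-(1/2) : ℝ))
      MeasureTheory.volume 0 1 := by
    have := (hA.comp_sub_left 1).symm
    simpa using this
  have hC := (hA.add hB).const_mul (1 / Real.sqrt (2 - E))
  rw [intervalIntegrable_iff_integrableOn_Ioo_of_le zero_le_one] at hC ⊢
  refine MeasureTheory.Integrable.mono' hC ?_ ?_
  · exact Measurable.aestronglyMeasurable (by fun_prop)
  · refine (MeasureTheory.ae_restrict_iff' measurableSet_Ioo).2 (Filter.Eventually.of_forall ?_)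
    rintro u ⟨hu0, hu1⟩
    have hv : 0 < 1 - u := by linarith
    have hs : 0 < Real.sqrt (2 - E) := Real.sqrt_pos.2 (by linarith)
    have ha : 0 < Real.sqrt u := Real.sqrt_pos.2 hu0
    have hb : 0 < Real.sqrt (1 - u) := Real.sqrt_pos.2 hv
    have haa := Real.sq_sqrt hu0.le
    have hbb := Real.sq_sqrt hv.le
    have hle : Real.sqrt (2 - E) * Real.sqrt (1 - u) ≤
        Real.sqrt (-E * (u - 1) ^ 2 - 2 * (u - 1)) := by
      rw [← Real.sqrt_mul (by linarith)]
      apply Real.sqrt_le_sqrt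
      nlinarith [mul_pos h0 (mul_pos hu0 hv)]
    have e1 : u ^ (-(1/2) : ℝ) = 1 / Real.sqrt u := by
      rw [Real.rpow_neg hu0.le, ← Real.sqrt_eq_rpow, one_div]
    have e2 : (1 - u) ^ (-(1/2) : ℝ) = 1 / Real.sqrt (1 - u) := by
      rw [Real.rpow_neg hv.le, ← Real.sqrt_eq_rpow, one_div]
    rw [Real.norm_of_nonneg (by positivity)]
    simp only [e1, e2]
    have hab : 1 ≤ Real.sqrt u + Real.sqrt (1 - u) := by
      nlinarith [mul_pos ha hb]
    calc _ ≤ 1 / (Real.sqrt u * (Real.sqrt (2 - E) * Real.sqrt (1 - u))) := by gcongr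
      _ ≤ (Real.sqrt u + Real.sqrt (1 - u)) /
          (Real.sqrt u * (Real.sqrt (2 - E) * Real.sqrt (1 - u))) := by gcongr
      _ = _ := by field_simp; ring

/-- The period function `P` is strictly increasing on `(0, 2)`. -/
theorem stmt17 :
    ∀ E₁ E₂ : ℝ, 0 < E₁ → E₁ < E₂ → E₂ < 2 → periodP E₁ < periodP E₂ := by
  intro E₁ E₂ h1 h12 h2
  have i1 := integrable_aux E₁ h1 (h12.trans h2)
  have i2 := integrable_aux E₂ (h1.trans h12) h2
  have key := intervalIntegral.intervalIntegral_pos_of_pos_on (i2.sub i1) (by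
    rintro u ⟨hu0, hu1⟩
    have hv : 0 < 1 - u := by linarith
    have ha : 0 < Real.sqrt u := Real.sqrt_pos.2 hu0
    have hp : 0 < -E₂ * (u - 1) ^ 2 - 2 * (u - 1) := by
      have h3 : 0 < (1 - u) * (2 - E₂ * (1 - u)) := by
        apply mul_pos hv
        nlinarith [mul_pos (h1.trans h12) hu0]
      nlinarith
    have hlt : -E₂ * (u - 1) ^ 2 - 2 * (u - 1) < -E₁ * (u - 1) ^ 2 - 2 * (u - 1) := by
      nlinarith [mul_pos (sub_pos.2 h12) (mul_pos hv hv)]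
    have hs := Real.sqrt_lt_sqrt hp.le hlt
    have hs2 := Real.sqrt_pos.2 hp
    exact sub_pos.2 (one_div_lt_one_div_of_lt (mul_pos ha hs2)
      (mul_lt_mul_of_pos_left hs ha))) zero_lt_one
  rw [intervalIntegral.integral_sub i2 i1] at key
  unfold periodP
  linarith
end
end
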